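/- For n ≥ 2, the real polynomial equation p^(n+1) + 2p^n − p^(n−1) − n(p−1)² = 0 has a root p_1 in the interval (0,1), and as n → ∞ this smallest positive root satisfies p_1 = 1 − (ln n)/n + o((ln n)/n). -/

import Mathlib

open Real Filter Asymptotics

lemma aux_exists_root (n : ℕ) (hn : 2 ≤ n) (b : ℝ) (hb : 0 ≤ b)
    (hfb : 0 < b ^ (n + 1) + 2 * b ^ n - b ^ (n - 1) - n * (b - 1) ^ 2) :
    ∃ q ∈ Set.Ioo (0:ℝ) b, q ^ (n + 1) + 2 * q ^ n - q ^ (n - 1) - n * (q - 1) ^ 2 = 0 := by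
  have hc : ContinuousOn (fun q : ℝ => q ^ (n + 1) + 2 * q ^ n - q ^ (n - 1) - n * (q - 1) ^ 2)
      (Set.Icc 0 b) := by fun_prop
  have h := intermediate_value_Ioo hb hc
  have h0 : (0:ℝ) ^ (n + 1) + 2 * 0 ^ n - 0 ^ (n - 1) - n * (0 - 1) ^ 2 < 0 := by
    rw [zero_pow (by omega), zero_pow (by omega), zero_pow (by omega)]
    have : (2:ℝ) ≤ n := by exact_mod_cast hn
    linarith
  obtain ⟨q, hq, hq'⟩ := h (show (0:ℝ) ∈ Set.Ioo _ _ from ⟨h0, hfb⟩)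
  exact ⟨q, hq, hq'⟩

lemma aux_smallest (n : ℕ) (hn : 2 ≤ n) :
    ∃ p : ℝ, p ∈ Set.Ioo (0 : ℝ) 1 ∧
        p ^ (n + 1) + 2 * p ^ n - p ^ (n - 1) - n * (p - 1) ^ 2 = 0 ∧
        (∀ q : ℝ, 0 < q →
          q ^ (n + 1) + 2 * q ^ n - q ^ (n - 1) - n * (q - 1) ^ 2 = 0 → p ≤ q) := by
  obtain ⟨r, hr, hr'⟩ := aux_exists_root n hn 1 zero_le_one (by norm_num)
  set S : Set ℝ := Set.Icc 0 1 ∩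
    {q | q ^ (n + 1) + 2 * q ^ n - q ^ (n - 1) - n * (q - 1) ^ 2 = 0} with hS
  have hcl : IsCompact S := by
    apply isCompact_Icc.inter_right
    exact isClosed_eq (by fun_prop) continuous_const
  have hrS : r ∈ S := ⟨⟨hr.1.le, hr.2.le⟩, hr'⟩
  obtain ⟨p, hp, hmin⟩ := hcl.exists_isLeast ⟨r, hrS⟩
  refine ⟨p, ⟨?_, (hmin hrS).trans_lt hr.2⟩, hp.2, ?_⟩
  · rcases hp.1.1.eq_or_lt with h | h
    · have h2 := hp.2
      rw [← h] at h2
      simp only [Set.mem_setOf_eq] at h2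
      rw [zero_pow (by omega), zero_pow (by omega), zero_pow (by omega)] at h2
      have : (2:ℝ) ≤ n := by exact_mod_cast hn
      linarith
    · exact h
  · intro q hq hq'
    by_cases h1 : q ≤ 1
    · exact hmin ⟨⟨hq.le, h1⟩, hq'⟩
    · exact hp.1.2.trans (not_le.1 h1).le

lemma aux_factor (n : ℕ) (hn : 2 ≤ n) (p : ℝ) :
    p ^ (n + 1) + 2 * p ^ n - p ^ (n - 1) - n * (p - 1) ^ 2
      = p ^ (n - 1) * (p ^ 2 + 2 * p - 1) - n * (1 - p) ^ 2 := by
  obtain ⟨m, rfl⟩ : ∃ m, n = m + 1 := ⟨n - 1, by omega⟩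
  simp only [Nat.add_sub_cancel]
  ring

lemma aux_upper (n : ℕ) (hn : 2 ≤ n) (e : ℝ) (he : 0 < e) (p : ℝ) (hp : p ∈ Set.Ioo (0:ℝ) 1)
    (hroot : p ^ (n + 1) + 2 * p ^ n - p ^ (n - 1) - n * (p - 1) ^ 2 = 0)
    (hy : 2 < Real.log n) (hne : 1 + e ≤ n * e) :
    1 - p ≤ (1 + e) * (Real.log n / n) := by
  by_contra! hlt
  rw [aux_factor n hn] at hroot
  obtain ⟨h0, h1⟩ := hp
  have hnpos : (0:ℝ) < n := by positivity
  set y := Real.log n with hydef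
  have hL : 0 < y / n := by positivity
  have hpe : p ≤ Real.exp (-(1 - p)) := by
    have := Real.add_one_le_exp (-(1 - p)); linarith
  have hcast : ((n - 1 : ℕ) : ℝ) = n - 1 := by
    rw [Nat.cast_sub (by omega)]; simp
  have hpow : p ^ (n - 1) ≤ 1 / n := by
    calc p ^ (n - 1) ≤ (Real.exp (-(1 - p))) ^ (n - 1) := by gcongr
      _ = Real.exp (-((n - 1) * (1 - p))) := by
        rw [← Real.exp_nat_mul, hcast]; congr 1; ring
      _ ≤ Real.exp (-y) := by
        apply Real.exp_le_exp.2
        have hn1 : (0:ℝ) ≤ n - 1 := by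
          have : (2:ℝ) ≤ n := by exact_mod_cast hn
          linarith
        have a1 : ((n:ℝ) - 1) * ((1 + e) * (y / n)) ≤ (n - 1) * (1 - p) := by gcongr
        have a2 : y ≤ ((n:ℝ) - 1) * ((1 + e) * (y / n)) := by
          have : ((n:ℝ) - 1) * ((1 + e) * (y / n)) = (n - 1) * (1 + e) * (y / n) := by ring
          rw [this]
          calc y = n * (y / n) := by field_simp
            _ ≤ _ := by
              apply mul_le_mul_of_nonneg_right _ hL.le
              nlinarith
        linarith
      _ = 1 / n := by rw [Real.exp_neg, hydef, Real.exp_log hnpos, one_div]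
  have hppos : 0 < p ^ (n - 1) := by positivity
  have b1 : p ^ (n - 1) * (p ^ 2 + 2 * p - 1) ≤ p ^ (n - 1) * 2 := by
    apply mul_le_mul_of_nonneg_left _ hppos.le
    nlinarith
  have b2 : y / n ≤ 1 - p := by nlinarith
  have b3 : (n:ℝ) * (y / n) ^ 2 ≤ n * (1 - p) ^ 2 := by gcongr
  have b4 : (n:ℝ) * (y / n) ^ 2 = y ^ 2 * (1 / n) := by field_simp
  have b5 : (0:ℝ) < 1 / n := by positivity
  have b6 : 2 * (1 / (n:ℝ)) < y ^ 2 * (1 / n) := mul_lt_mul_of_pos_right (by nlinarith) b5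
  linarith

lemma aux_lower (n : ℕ) (hn : 2 ≤ n) (e : ℝ) (he : 0 < e) (he1 : e < 1) (p : ℝ)
    (hmin : ∀ q : ℝ, 0 < q →
          q ^ (n + 1) + 2 * q ^ n - q ^ (n - 1) - n * (q - 1) ^ 2 = 0 → p ≤ q)
    (hy : 2 < Real.log n) (h4 : Real.log n / n ≤ 1 / 4) (h5 : Real.log n / n ≤ e / 2)
    (h6 : Real.log n ^ 2 < Real.exp (e / 2 * Real.log n)) :
    (1 - e) * (Real.log n / n) ≤ 1 - p := by
  have hnpos : (0:ℝ) < n := by positivity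
  set y := Real.log n with hydef
  have hL : 0 < y / n := by positivity
  set x := (1 - e) * (y / n) with hx
  have hx0 : 0 < x := mul_pos (by linarith) hL
  have hxL : x ≤ y / n := by nlinarith
  have hpos : 0 < 1 - x := by linarith
  have key : Real.exp (-(x / (1 - x))) ≤ 1 - x := by
    have := Real.add_one_le_exp (x / (1 - x))
    have h2 : x / (1 - x) + 1 = (1 - x)⁻¹ := by field_simp; ring
    rw [h2] at this
    rw [Real.exp_neg]
    exact inv_le_of_inv_le₀ hpos this
  have hpow : Real.exp (e / 2 * y) * (1 / n) ≤ (1 - x) ^ n := by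
    calc Real.exp (e / 2 * y) * (1 / n) = Real.exp (e / 2 * y - y) := by
          rw [Real.exp_sub, hydef, Real.exp_log hnpos]; ring
      _ ≤ Real.exp (n * (-(x / (1 - x)))) := by
          apply Real.exp_le_exp.2
          have : (n:ℝ) * (x / (1 - x)) ≤ (1 - e / 2) * y := by
            have hnx : (n:ℝ) * x = (1 - e) * y := by rw [hx]; field_simp
            rw [← mul_div_assoc, hnx, div_le_iff₀ hpos]
            have : 1 - e ≤ (1 - e / 2) * (1 - x) := by nlinarith
            nlinarith
          linarith
      _ = (Real.exp (-(x / (1 - x)))) ^ n := by rw [← Real.exp_nat_mul]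
      _ ≤ (1 - x) ^ n := by gcongr
  have hf : 0 < (1 - x) ^ (n + 1) + 2 * (1 - x) ^ n - (1 - x) ^ (n - 1)
      - n * ((1 - x) - 1) ^ 2 := by
    rw [aux_factor n hn]
    have c1 : (1 - x) ^ n = (1 - x) ^ (n - 1) * (1 - x) := by
      rw [← pow_succ]; congr 1; omega
    have c2 : (1 - x) ^ (n - 1) * (1 - x) ≤ (1 - x) ^ (n - 1) * ((1 - x) ^ 2 + 2 * (1 - x) - 1) := by
      apply mul_le_mul_of_nonneg_left _ (by positivity)
      nlinarith
    have c3 : (n:ℝ) * (1 - (1 - x)) ^ 2 ≤ n * (y / n) ^ 2 := by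
      rw [sub_sub_cancel]; gcongr
    have b4 : (n:ℝ) * (y / n) ^ 2 = y ^ 2 * (1 / n) := by field_simp
    have b5 : y ^ 2 * (1 / n) < Real.exp (e / 2 * y) * (1 / n) := by gcongr
    linarith
  obtain ⟨q, hq, hq'⟩ := aux_exists_root n hn (1 - x) hpos.le hf
  have := hmin q hq.1 hq'
  linarith [hq.2]

/-- For each n ≥ 2 the polynomial p^{n+1} + 2p^n − p^{n−1} − n(p−1)² has a smallest
positive root p_1 ∈ (0,1), and p_1 = 1 − (ln n)/n + o((ln n)/n) as n → ∞. -/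
theorem smallest_root_asymptotics :
    ∃ p : ℕ → ℝ,
      (∀ n : ℕ, 2 ≤ n →
        p n ∈ Set.Ioo (0 : ℝ) 1 ∧
        (p n) ^ (n + 1) + 2 * (p n) ^ n - (p n) ^ (n - 1) - n * (p n - 1) ^ 2 = 0 ∧
        (∀ q : ℝ, 0 < q →
          q ^ (n + 1) + 2 * q ^ n - q ^ (n - 1) - n * (q - 1) ^ 2 = 0 → p n ≤ q)) ∧
      (fun n : ℕ => p n - (1 - Real.log n / n)) =o[atTop] (fun n : ℕ => Real.log n / n) := by
  choose! p hp using aux_smallest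
  refine ⟨p, hp, ?_⟩
  rw [isLittleO_iff]
  intro c hc
  set e := min c (1 / 2) with he
  have he0 : 0 < e := lt_min hc (by norm_num)
  have hec : e ≤ c := min_le_left _ _
  have he1 : e < 1 := (min_le_right _ _).trans_lt (by norm_num)
  have hlog : Tendsto (fun n : ℕ => Real.log n) atTop atTop :=
    Real.tendsto_log_atTop.comp tendsto_natCast_atTop_atTop
  have hL : Tendsto (fun n : ℕ => Real.log n / n) atTop (nhds 0) :=
    (Real.isLittleO_log_id_atTop.tendsto_div_nhds_zero).comp tendsto_natCast_atTop_atTop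
  have h6 : ∀ᶠ n : ℕ in atTop, Real.log n ^ 2 < Real.exp (e / 2 * Real.log n) := by
    have := (isLittleO_pow_exp_pos_mul_atTop 2 (half_pos he0)).def (c := 1 / 2) (by norm_num)
    filter_upwards [hlog.eventually this] with n h
    rw [Real.norm_of_nonneg (by positivity), Real.norm_of_nonneg (by positivity)] at h
    linarith [Real.exp_pos (e / 2 * Real.log n)]
  filter_upwards [eventually_ge_atTop 2, h6, hlog.eventually_gt_atTop 2,
    hL.eventually_le_const (show (0:ℝ) < 1 / 4 by norm_num),
    hL.eventually_le_const (half_pos he0),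
    (tendsto_natCast_atTop_atTop (R := ℝ)).eventually_ge_atTop ((1 + e) / e)] with n hn h6 hy h4 h5 hne
  obtain ⟨h1, h2, h3⟩ := hp n hn
  have hne' : 1 + e ≤ n * e := by rwa [div_le_iff₀ he0] at hne
  have u := aux_upper n hn e he0 (p n) h1 h2 hy hne'
  have l := aux_lower n hn e he0 he1 (p n) h3 hy h4 h5 h6
  have hLp : 0 ≤ Real.log n / n := by positivity
  rw [Real.norm_of_nonneg hLp, Real.norm_eq_abs, abs_le]
  have := mul_le_mul_of_nonneg_right hec hLp
  constructor <;> linarith
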